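/- Let S be a unital inverse semigroup, f, g ∈ ℓ¹(S) and ξ ∈ ℓ²(S). Define (λ̃_r(f)ξ)(x) = ∑_{y : y y⋆ = x x⋆} f(y) · ξ(y⋆ x) and (ρ̃_r(g)ξ)(x) = ∑_{u : u u⋆ = x⋆ x} g(u) · ξ(x u); these again define square-summable functions. Then the operators commute: λ̃_r(f)(ρ̃_r(g)ξ) = ρ̃_r(g)(λ̃_r(f)ξ), both being equal at each x ∈ S to ∑_{y : y y⋆ = x x⋆} ∑_{u : u u⋆ = x⋆ x} f(y) · g(u) · ξ(y⋆ x u). (Lemma 2.5) -/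

import Mathlib

open scoped Classical ComplexOrder

noncomputable section

/-- A unital inverse semigroup: a monoid with an involution `star` satisfying
`star (x*y) = star y * star x`, `star (star x) = x`, `x * star x * x = x`,
`star x * x * star x = star x`, in which all idempotents commute. -/
class InverseSemigroup (S : Type*) extends Monoid S, StarMul S where
  mul_star_mul_self : ∀ x : S, x * star x * x = x
  star_mul_self_star : ∀ x : S, star x * x * star x = star x
  idem_comm : ∀ e f : S, e * e = e → f * f = f → e * f = f * e

variable {S : Type*} [InverseSemigroup S]

/-- The restricted left translate `λ_r(x)u`. -/
def restrictedTranslate (x : S) (u : S → ℂ) : S → ℂ := fun y =>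
  if x * star x = y * star y then u (star x * y) else 0

/-- `u` is restricted positive definite. -/
def IsRestrictedPosDef (u : S → ℂ) : Prop :=
  (∃ M : ℝ, ∀ x, ‖u x‖ ≤ M) ∧
  ∀ (n : ℕ) (x : Fin n → S) (c : Fin n → ℂ),
    0 ≤ ∑ i, ∑ j, (starRingEnd ℂ) (c i) * c j * restrictedTranslate (x i) u (x j)

/-- `u` is extendible restricted positive definite. -/
def IsExtendibleRPD (u : S → ℂ) : Prop :=
  IsRestrictedPosDef u ∧ (∀ x, u (star x) = (starRingEnd ℂ) (u x)) ∧
  ∃ C : ℝ, 0 < C ∧ ∀ (n : ℕ) (x : Fin n → S) (c : Fin n → ℂ),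
    ((‖∑ i, c i * u (x i)‖ ^ 2 : ℝ) : ℂ) ≤
      (C : ℂ) * ∑ i, ∑ j, (starRingEnd ℂ) (c i) * c j * restrictedTranslate (x i) u (x j)

/-- The restricted convolution `ξ • η`. -/
def rconv (ξ η : S → ℂ) : S → ℂ := fun x =>
  ∑' y, if star x * x = y * star y then ξ (x * y) * η (star y) else 0

/-- `ξ̃(x) = conj (ξ (star x))`. -/
def tilde (ξ : S → ℂ) : S → ℂ := fun x => (starRingEnd ℂ) (ξ (star x))

/-- Multiplication of the restricted semigroup `S_r = Option S`. -/
def rmul : Option S → Option S → Option S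
  | some x, some y => if star x * x = y * star y then some (x * y) else none
  | _, _ => none

/-- Involution of the restricted semigroup `S_r = Option S`. -/
def rstar : Option S → Option S
  | some x => some (star x)
  | none => none


/-- The operator `λ̃_r(f)`, `(λ̃_r(f)ξ)(x) = ∑_{y : y y⋆ = x x⋆} f(y) ξ(y⋆ x)`. -/
def lamTilde (f ξ : S → ℂ) : S → ℂ := fun x =>
  ∑' y : S, if y * star y = x * star x then f y * ξ (star y * x) else 0

/-- The operator `ρ̃_r(g)`, `(ρ̃_r(g)ξ)(x) = ∑_{u : u u⋆ = x⋆ x} g(u) ξ(x u)`. -/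
def rhoTilde (g ξ : S → ℂ) : S → ℂ := fun x =>
  ∑' u : S, if u * star u = star x * x then g u * ξ (x * u) else 0

open scoped ENNReal

namespace InverseSemigroup

theorem star_mul_mul_self_of_eq {S : Type*} [InverseSemigroup S] {x y : S}
    (h : y * star y = x * star x) : star (star y * x) * (star y * x) = star x * x := by
  calc star (star y * x) * (star y * x) = star x * (y * star y) * x := by
        simp only [star_mul, star_star, mul_assoc]
    _ = star x * x := by rw [h, ← mul_assoc, star_mul_self_star]

theorem mul_mul_star_self_of_eq {S : Type*} [InverseSemigroup S] {x u : S}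
    (h : u * star u = star x * x) : x * u * star (x * u) = x * star x := by
  calc x * u * star (x * u) = x * (u * star u) * star x := by
        simp only [star_mul, mul_assoc]
    _ = x * star x := by rw [h, ← mul_assoc, mul_star_mul_self]

theorem injOn_star_mul {S : Type*} [InverseSemigroup S] (y : S) :
    Set.InjOn (fun x => star y * x) {x | y * star y = x * star x} := by
  refine Set.LeftInvOn.injOn (f₁' := fun z => y * z) fun x hx => ?_
  change y * (star y * x) = x
  rw [← mul_assoc, show y * star y = x * star x from hx, mul_star_mul_self]

theorem injOn_mul_right {S : Type*} [InverseSemigroup S] (u : S) :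
    Set.InjOn (fun x => x * u) {x | u * star u = star x * x} := by
  refine Set.LeftInvOn.injOn (f₁' := fun z => z * star u) fun x hx => ?_
  change x * u * star u = x
  rw [mul_assoc, show u * star u = star x * x from hx, ← mul_assoc, mul_star_mul_self]

end InverseSemigroup

/-- Composing with a partial injection, extended by zero, is a contraction of `ℓ²`. -/
theorem exists_lp_two_comp_injOn {α β : Type*} (s : Set α) (φ : α → β) (hφ : s.InjOn φ)
    (ξ : lp (fun _ : β => ℂ) 2) :
    ∃ η : lp (fun _ : α => ℂ) 2, (∀ x, η x = if x ∈ s then ξ (φ x) else 0) ∧ ‖η‖ ≤ ‖ξ‖ := by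
  have two_pos : 0 < (2 : ℝ≥0∞).toReal := by norm_num
  have bound (t : Finset α) :
      ∑ x ∈ t, ‖if x ∈ s then ξ (φ x) else 0‖ ^ (2 : ℝ≥0∞).toReal
        ≤ ‖ξ‖ ^ (2 : ℝ≥0∞).toReal := by
    calc ∑ x ∈ t, ‖if x ∈ s then ξ (φ x) else 0‖ ^ (2 : ℝ≥0∞).toReal
        = ∑ x ∈ t with x ∈ s, ‖ξ (φ x)‖ ^ (2 : ℝ≥0∞).toReal := by
          rw [Finset.sum_filter]
          refine Finset.sum_congr rfl fun x _ => ?_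
          split_ifs <;> simp
      _ = ∑ z ∈ {x ∈ t | x ∈ s}.image φ, ‖ξ z‖ ^ (2 : ℝ≥0∞).toReal := by
          rw [Finset.sum_image fun a ha b hb hab =>
            hφ (Finset.mem_filter.1 ha).2 (Finset.mem_filter.1 hb).2 hab]
      _ ≤ ‖ξ‖ ^ (2 : ℝ≥0∞).toReal := lp.sum_rpow_le_norm_rpow two_pos ξ _
  exact ⟨⟨fun x => if x ∈ s then ξ (φ x) else 0, memℓp_gen' bound⟩, fun _ => rfl,
    lp.norm_le_of_forall_sum_le two_pos (norm_nonneg _) bound⟩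

theorem memℓp_one_iff_summable_norm {α : Type*} {f : α → ℂ} :
    Memℓp f 1 ↔ Summable fun i => ‖f i‖ := by
  simp [memℓp_gen_iff (p := 1) (by norm_num)]

/-- An `ℓ¹` combination of partial injections acts on `ℓ²`. -/
theorem memℓp_two_tsum_comp_injOn {ι α β : Type*} (s : ι → Set α) (φ : ι → α → β)
    (hφ : ∀ i, (s i).InjOn (φ i)) {f : ι → ℂ} (hf : Memℓp f 1) {ξ : β → ℂ} (hξ : Memℓp ξ 2) :
    Memℓp (fun x => ∑' i, if x ∈ s i then f i * ξ (φ i x) else 0) 2 := by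
  have : Fact ((1 : ℝ≥0∞) ≤ 2) := ⟨by norm_num⟩
  choose η η_apply η_norm using fun i => exists_lp_two_comp_injOn (s i) (φ i) (hφ i) ⟨ξ, hξ⟩
  have summable_smul : Summable fun i => f i • η i := by
    refine Summable.of_norm_bounded
      ((memℓp_one_iff_summable_norm.1 hf).mul_right ‖(⟨ξ, hξ⟩ : lp (fun _ : β => ℂ) 2)‖)
      fun i => ?_
    rw [norm_smul]
    exact mul_le_mul_of_nonneg_left (η_norm i) (norm_nonneg _)
  convert lp.memℓp (∑' i, f i • η i) using 1
  ext x
  have eval_sum := (lp.evalCLM ℂ (fun _ : α => ℂ) 2 x).map_tsum summable_smul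
  refine Eq.trans (tsum_congr fun i => ?_) eval_sum.symm
  change _ = f i * η i x
  rw [η_apply]
  split_ifs <;> simp

/-- A restricted double series with `ℓ¹` weights and bounded values is absolutely summable. -/
theorem summable_ite_mul_mul {ι κ : Type*} {f : ι → ℂ} {g : κ → ℂ} (hf : Memℓp f 1)
    (hg : Memℓp g 1) (p : ι → Prop) (q : κ → Prop) {c : ι → κ → ℂ} {M : ℝ}
    (hc : ∀ i j, ‖c i j‖ ≤ M) :
    Summable (Function.uncurry fun i j =>
      if p i then (if q j then f i * g j * c i j else 0) else 0) := by
  have summable_prod := (memℓp_one_iff_summable_norm.1 hf).mul_of_nonneg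
    (memℓp_one_iff_summable_norm.1 hg) (fun _ => norm_nonneg _) (fun _ => norm_nonneg _)
  refine Summable.of_norm_bounded (summable_prod.mul_right M) fun ⟨i, j⟩ => ?_
  have hM : 0 ≤ M := (norm_nonneg _).trans (hc i j)
  have weight_nonneg : 0 ≤ ‖f i‖ * ‖g j‖ * M := by positivity
  simp only [Function.uncurry]
  split_ifs
  · rw [norm_mul, norm_mul]
    exact mul_le_mul_of_nonneg_left (hc i j) (by positivity)
  · simpa using weight_nonneg
  · simpa using weight_nonneg

theorem memℓp_lamTilde {S : Type*} [InverseSemigroup S] {f ξ : S → ℂ}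
    (hf : Memℓp f 1) (hξ : Memℓp ξ 2) : Memℓp (lamTilde f ξ) 2 :=
  memℓp_two_tsum_comp_injOn (fun y => {x | y * star y = x * star x}) (fun y x => star y * x)
    InverseSemigroup.injOn_star_mul hf hξ

theorem memℓp_rhoTilde {S : Type*} [InverseSemigroup S] {g ξ : S → ℂ}
    (hg : Memℓp g 1) (hξ : Memℓp ξ 2) : Memℓp (rhoTilde g ξ) 2 :=
  memℓp_two_tsum_comp_injOn (fun u => {x | u * star u = star x * x}) (fun u x => x * u)
    InverseSemigroup.injOn_mul_right hg hξ

theorem lamTilde_rhoTilde_apply {S : Type*} [InverseSemigroup S] (f g ξ : S → ℂ) (x : S) :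
    lamTilde f (rhoTilde g ξ) x =
      ∑' y : S, ∑' u : S,
        if y * star y = x * star x then
          (if u * star u = star x * x then f y * g u * ξ (star y * x * u) else 0)
        else 0 := by
  refine tsum_congr fun y => ?_
  split_ifs with hy
  · rw [rhoTilde, InverseSemigroup.star_mul_mul_self_of_eq hy, ← tsum_mul_left]
    simp only [mul_ite, mul_zero, mul_assoc]
  · exact tsum_zero.symm

theorem rhoTilde_lamTilde_apply {S : Type*} [InverseSemigroup S] (f g ξ : S → ℂ) (x : S) :
    rhoTilde g (lamTilde f ξ) x =
      ∑' u : S, ∑' y : S,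
        if y * star y = x * star x then
          (if u * star u = star x * x then f y * g u * ξ (star y * x * u) else 0)
        else 0 := by
  refine tsum_congr fun u => ?_
  split_ifs with hu
  · rw [lamTilde, InverseSemigroup.mul_mul_star_self_of_eq hu, ← tsum_mul_left]
    simp only [mul_ite, mul_zero, mul_assoc, mul_left_comm (g u)]
  · simp only [ite_self, tsum_zero]

/-- Lemma 2.5: for `f, g ∈ ℓ¹(S)` and `ξ ∈ ℓ²(S)`, `λ̃_r(f)` and `ρ̃_r(g)` yield
square-summable functions and commute, both compositions being given by the double sum
`∑_{y : y y⋆ = x x⋆} ∑_{u : u u⋆ = x⋆ x} f(y) g(u) ξ(y⋆ x u)`. -/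
theorem lamTilde_rhoTilde_comm {S : Type*} [InverseSemigroup S] (f g ξ : S → ℂ)
    (hf : Memℓp f 1) (hg : Memℓp g 1) (hξ : Memℓp ξ 2) :
    Memℓp (lamTilde f ξ) 2 ∧ Memℓp (rhoTilde g ξ) 2 ∧
    ∀ x : S, lamTilde f (rhoTilde g ξ) x = rhoTilde g (lamTilde f ξ) x ∧
      lamTilde f (rhoTilde g ξ) x =
        ∑' y : S, ∑' u : S,
          if y * star y = x * star x then
            (if u * star u = star x * x then f y * g u * ξ (star y * x * u) else 0)
          else 0 := by
  refine ⟨memℓp_lamTilde hf hξ, memℓp_rhoTilde hg hξ, fun x =>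
    ⟨?_, lamTilde_rhoTilde_apply f g ξ x⟩⟩
  rw [lamTilde_rhoTilde_apply, rhoTilde_lamTilde_apply]
  exact (summable_ite_mul_mul hf hg (fun y => y * star y = x * star x)
    (fun u => u * star u = star x * x) fun y u =>
      lp.norm_apply_le_norm (by norm_num) (⟨ξ, hξ⟩ : lp (fun _ : S => ℂ) 2)
        (star y * x * u)).tsum_comm.symm
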